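/- Let Γ be a finitely generated group, let Γ_ab be its abelianization, and let J ⊂ S_Γ be the ideal generated by all elements [abc] − [acb] with a, b, c ∈ Γ. Then the abelianization homomorphism Γ → Γ_ab induces an isomorphism of ℂ-algebras S_{Γ_ab} ≅ S_Γ / J. -/

import Mathlib

/-!
A skein algebra has a universal property: algebra homomorphisms `S_G → A` are the same as maps
`f : G → A` with `f 1 = 2`, `f a * f b = f b * f a` and `f a * f b = f (a * b) + f (a * b⁻¹)`
(`exists_skeinAlgebra_lift`, `skeinAlgebra_hom_ext`).

The map `g ↦ [g̅]` kills `J`, because `abc` and `acb` agree in `Γ_ab`; this gives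
`S_Γ/J → S_{Γ_ab}`. Conversely, in `S_Γ/J` the class of `[g]` depends only on the image of `g` in
`Γ_ab`: the set of `h` with `[x h] = [x]` for all `x` is a subgroup, and it contains every
commutator since
`[x · b c b⁻¹ c⁻¹] = [(x b) · c · (b⁻¹ c⁻¹)] = [(x b) · (b⁻¹ c⁻¹) · c] = [x]`.
So `g̅ ↦ [g]` is a well-defined map on `Γ_ab` satisfying the skein relations. The two homomorphisms
are inverse to each other on generators.
-/

noncomputable section

/-- The element of the tensor algebra `T(ℂG)` corresponding to a group element `g ∈ G`. -/
def skeinGen (G : Type) [Group G] (g : G) : TensorAlgebra ℂ (MonoidAlgebra ℂ G) :=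
  TensorAlgebra.ι ℂ (MonoidAlgebra.of ℂ G g)

/-- The defining relations of the skein algebra of a group `G`: `e = 2`,
`α ⊗ β = β ⊗ α` and `α ⊗ β = αβ + αβ⁻¹` for all `α, β ∈ G`. -/
inductive SkeinRel (G : Type) [Group G] :
    TensorAlgebra ℂ (MonoidAlgebra ℂ G) → TensorAlgebra ℂ (MonoidAlgebra ℂ G) → Prop
  | unit : SkeinRel G (skeinGen G 1) 2
  | comm (a b : G) : SkeinRel G (skeinGen G a * skeinGen G b) (skeinGen G b * skeinGen G a)
  | mul (a b : G) : SkeinRel G (skeinGen G a * skeinGen G b)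
      (skeinGen G (a * b) + skeinGen G (a * b⁻¹))

/-- The skein algebra `S_G` of a group `G`. -/
abbrev SkeinAlgebra (G : Type) [Group G] := RingQuot (SkeinRel G)

/-- The class `[g] ∈ S_G` of a group element `g ∈ G`. -/
def skeinClass (G : Type) [Group G] (g : G) : SkeinAlgebra G :=
  RingQuot.mkAlgHom ℂ (SkeinRel G) (skeinGen G g)

/-- The relations `[abc] = [acb]` for `a, b, c ∈ Γ`.  The quotient of `S_Γ` by the ring
congruence generated by these pairs is `S_Γ / J`, where `J` is the ideal generated by the
elements `[abc] − [acb]`. -/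
inductive NonSimpleRel (Γ : Type) [Group Γ] : SkeinAlgebra Γ → SkeinAlgebra Γ → Prop
  | rel (a b c : Γ) :
      NonSimpleRel Γ (skeinClass Γ (a * b * c)) (skeinClass Γ (a * c * b))

/-- The values of a skein algebra homomorphism on the generators can be prescribed by any map
satisfying the defining relations. -/
theorem exists_skeinAlgebra_lift {G : Type} [Group G] {A : Type} [Semiring A] [Algebra ℂ A]
    (f : G → A) (h1 : f 1 = 2) (hc : ∀ a b, f a * f b = f b * f a)
    (hm : ∀ a b, f a * f b = f (a * b) + f (a * b⁻¹)) :
    ∃ φ : SkeinAlgebra G →ₐ[ℂ] A, ∀ g, φ (skeinClass G g) = f g := by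
  obtain ⟨L, hL⟩ : ∃ L : MonoidAlgebra ℂ G →ₗ[ℂ] A, ∀ g, L (MonoidAlgebra.of ℂ G g) = f g :=
    ⟨(Finsupp.lift A ℂ G f) ∘ₗ (MonoidAlgebra.coeffLinearEquiv ℂ).toLinearMap,
      fun g => by simp⟩
  have hgen : ∀ g, TensorAlgebra.lift ℂ L (skeinGen G g) = f g := fun g => by
    rw [skeinGen, TensorAlgebra.lift_ι_apply, hL]
  refine ⟨RingQuot.liftAlgHom ℂ ⟨TensorAlgebra.lift ℂ L, ?_⟩, fun g => ?_⟩
  · intro x y h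
    cases h with
    | unit => rw [hgen, h1, map_ofNat]
    | comm a b => simp only [map_mul, hgen, hc a b]
    | mul a b => simp only [map_mul, map_add, hgen, hm a b]
  · rw [skeinClass, RingQuot.liftAlgHom_mkAlgHom_apply, hgen]

theorem skeinAlgebra_hom_ext {G : Type} [Group G] {A : Type} [Semiring A] [Algebra ℂ A]
    {φ ψ : SkeinAlgebra G →ₐ[ℂ] A} (h : ∀ g, φ (skeinClass G g) = ψ (skeinClass G g)) :
    φ = ψ := by
  apply RingQuot.ringQuot_ext'
  apply TensorAlgebra.hom_ext
  apply MonoidAlgebra.lhom_ext'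
  intro g
  ext
  exact h g

theorem skeinClass_one (G : Type) [Group G] : skeinClass G 1 = 2 := by
  rw [skeinClass, RingQuot.mkAlgHom_rel ℂ SkeinRel.unit, map_ofNat]

theorem skeinClass_comm {G : Type} [Group G] (a b : G) :
    skeinClass G a * skeinClass G b = skeinClass G b * skeinClass G a := by
  simp only [skeinClass, ← map_mul]
  exact RingQuot.mkAlgHom_rel ℂ (SkeinRel.comm a b)

theorem skeinClass_mul {G : Type} [Group G] (a b : G) :
    skeinClass G a * skeinClass G b = skeinClass G (a * b) + skeinClass G (a * b⁻¹) := by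
  simp only [skeinClass, ← map_mul, ← map_add]
  exact RingQuot.mkAlgHom_rel ℂ (SkeinRel.mul a b)

/-- A function on `Γ` with `f (abc) = f (acb)` is constant on the cosets of the commutator
subgroup. -/
theorem eq_of_abelianization_eq {Γ : Type} [Group Γ] {A : Type} (f : Γ → A)
    (hf : ∀ a b c, f (a * b * c) = f (a * c * b)) {x y : Γ}
    (h : Abelianization.of x = Abelianization.of y) : f x = f y := by
  let K : Subgroup Γ :=
    { carrier := {k | ∀ z, f (z * k) = f z}
      one_mem' := fun z => by rw [mul_one]
      mul_mem' := fun {a b} ha hb z => by rw [← mul_assoc, hb, ha]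
      inv_mem' := fun {a} ha z => by
        have := ha (z * a⁻¹)
        rw [inv_mul_cancel_right] at this
        exact this.symm }
  have hK : commutator Γ ≤ K := by
    rw [commutator_def, Subgroup.commutator_le]
    intro b _ c _ z
    have := hf (z * b) c (b⁻¹ * c⁻¹)
    simpa [commutatorElement_def, mul_assoc] using this
  have hxy : x⁻¹ * y ∈ K := hK (QuotientGroup.eq.mp h)
  have := hxy x
  rw [mul_inv_cancel_left] at this
  exact this.symm

/-- Let `Γ` be a finitely generated group and `J ⊆ S_Γ` the ideal generated by the
elements `[abc] − [acb]`, `a, b, c ∈ Γ`.  Then the abelianization homomorphism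
`Γ → Γ_ab` induces an isomorphism of `ℂ`-algebras `S_Γ/J ≅ S_{Γ_ab}` (sending the class
of `[g]` to `[g̅]` for every `g ∈ Γ`). -/
theorem skeinAlgebra_nonSimple_iso_abelianization (Γ : Type) [Group Γ] [Group.FG Γ] :
    ∃ e : RingQuot (NonSimpleRel Γ) ≃ₐ[ℂ] SkeinAlgebra (Abelianization Γ),
      ∀ g : Γ,
        e (RingQuot.mkAlgHom ℂ (NonSimpleRel Γ) (skeinClass Γ g)) =
          skeinClass (Abelianization Γ) (Abelianization.of g) := by
  obtain ⟨φ, hφ⟩ := exists_skeinAlgebra_lift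
    (fun g : Γ => skeinClass (Abelianization Γ) (Abelianization.of g))
    (by simp only [map_one, skeinClass_one]) (fun a b => skeinClass_comm _ _)
    (fun a b => by simp only [map_mul, map_inv, skeinClass_mul])
  let Φ : RingQuot (NonSimpleRel Γ) →ₐ[ℂ] SkeinAlgebra (Abelianization Γ) :=
    RingQuot.liftAlgHom ℂ ⟨φ, by
      rintro _ _ ⟨a, b, c⟩
      simp only [hφ, map_mul, mul_right_comm]⟩
  have hΦ : ∀ g, Φ (RingQuot.mkAlgHom ℂ (NonSimpleRel Γ) (skeinClass Γ g)) =
      skeinClass (Abelianization Γ) (Abelianization.of g) := fun g => by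
    simp only [Φ, RingQuot.liftAlgHom_mkAlgHom_apply, hφ]
  let f : Γ → RingQuot (NonSimpleRel Γ) :=
    fun g => RingQuot.mkAlgHom ℂ (NonSimpleRel Γ) (skeinClass Γ g)
  have hf : ∀ a b c, f (a * b * c) = f (a * c * b) := fun a b c =>
    RingQuot.mkAlgHom_rel ℂ (NonSimpleRel.rel a b c)
  have hsurj : Function.Surjective (Abelianization.of (G := Γ)) :=
    QuotientGroup.mk_surjective
  -- `F` descends `f` to `Γ_ab` by choosing a lift, which is harmless by `hF`.
  let F : Abelianization Γ → RingQuot (NonSimpleRel Γ) := fun x => f (Function.surjInv hsurj x)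
  have hF : ∀ g, F (Abelianization.of g) = f g := fun g =>
    eq_of_abelianization_eq f hf (Function.surjInv_eq hsurj _)
  obtain ⟨Ψ, hΨ⟩ := exists_skeinAlgebra_lift F
    (by rw [← map_one Abelianization.of, hF]; simp only [f, skeinClass_one, map_ofNat])
    (by
      intro x y
      obtain ⟨a, rfl⟩ := hsurj x
      obtain ⟨b, rfl⟩ := hsurj y
      simp only [hF, f, ← map_mul, skeinClass_comm a b])
    (by
      intro x y
      obtain ⟨a, rfl⟩ := hsurj x
      obtain ⟨b, rfl⟩ := hsurj y
      rw [← map_inv, ← map_mul Abelianization.of, ← map_mul Abelianization.of, hF, hF, hF, hF]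
      simp only [f]
      rw [← map_mul, ← map_add, skeinClass_mul])
  refine ⟨AlgEquiv.ofAlgHom Φ Ψ ?_ ?_, hΦ⟩
  · apply skeinAlgebra_hom_ext
    intro x
    obtain ⟨a, rfl⟩ := hsurj x
    simp only [AlgHom.comp_apply, hΨ, hF, f, hΦ, AlgHom.id_apply]
  · apply RingQuot.ringQuot_ext'
    apply skeinAlgebra_hom_ext
    intro a
    simp only [AlgHom.comp_apply, hΦ, hΨ, hF, f, AlgHom.id_apply]

end
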